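/- Let (R, m) be a commutative Noetherian local ring and M an R-module of Krull dimension n such that H^n_m(M) ≠ 0, and let I be an ideal of R with dim(R/(I + Ann M)) = 1, where Ann M is the annihilator of M. Then cd(I,M) = n − 1 or cd(I,M) = n. -/

import Mathlib

universe u

open CategoryTheory

/-- The cohomological dimension of `M` with respect to `I`:
`cd(I,M) = sup { i ∈ ℕ | H^i_I(M) ≠ 0 }`, as an element of `ℕ∞`. -/
noncomputable def cohomologicalDimension {R : Type u} [CommRing R] (I : Ideal R)
    (M : ModuleCat.{u} R) : ℕ∞ :=
  sSup {c : ℕ∞ | ∃ i : ℕ, c = i ∧ Nontrivial ((localCohomology I i).obj M)}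

namespace localCohomology

open Opposite Limits

noncomputable section

variable {R : Type u} [CommRing R]

/-- The map of Hom complexes into `Y` induced by a chain map. -/
abbrev linearYonedaMap {K L : ChainComplex (ModuleCat.{u} R) ℕ} (φ : K ⟶ L) (Y : ModuleCat.{u} R) :
    L.linearYonedaObj R Y ⟶ K.linearYonedaObj R Y :=
  (HomologicalComplex.unopFunctor _ _).map
    (((((linearYoneda R (ModuleCat.{u} R)).obj Y).rightOp.mapHomologicalComplex _).map φ).op)

lemma isoExt_hom_naturality {X X' : ModuleCat.{u} R} (g : X' ⟶ X)
    (P' : ProjectiveResolution X') (P : ProjectiveResolution X) (φ : P'.complex ⟶ P.complex)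
    (comm : φ.f 0 ≫ P.π.f 0 = P'.π.f 0 ≫ g) (n : ℕ) (Y : ModuleCat.{u} R) :
    ((Ext R (ModuleCat.{u} R) n).map g.op).app Y ≫ (P'.isoExt n Y).hom =
      (P.isoExt n Y).hom ≫ HomologicalComplex.homologyMap (linearYonedaMap φ Y) n := by
  have h := ProjectiveResolution.isoLeftDerivedObj_inv_naturality g P' P φ comm
    ((linearYoneda R (ModuleCat.{u} R)).obj Y).rightOp n
  have h2 := HomologicalComplex.homologyOp_hom_naturality (linearYonedaMap φ Y) n
  have inv_square {A₁ A₂ B₁ B₂ : (ModuleCat.{u} R)ᵒᵖ} {f : A₁ ⟶ A₂} {i : A₂ ≅ B₂} {j : A₁ ≅ B₁}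
      {l : B₁ ⟶ B₂} (e : f ≫ i.hom = j.hom ≫ l) : j.inv ≫ f = l ≫ i.inv := by
    rw [Iso.eq_comp_inv, Category.assoc, e, Iso.inv_hom_id_assoc]
  have paste {A₁ A₂ B₁ B₂ C₁ C₂ : ModuleCat.{u} R} {m : A₁ ⟶ A₂} {a' : A₂ ⟶ B₂} {a : A₁ ⟶ B₁}
      {k : B₁ ⟶ B₂} {b' : B₂ ⟶ C₂} {b : B₁ ⟶ C₁} {l : C₁ ⟶ C₂} (e₁ : m ≫ a' = a ≫ k)
      (e₂ : k ≫ b' = b ≫ l) : m ≫ (a' ≫ b') = (a ≫ b) ≫ l := by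
    rw [← Category.assoc, e₁, Category.assoc, e₂, Category.assoc]
  exact paste (congrArg Quiver.Hom.unop h) (congrArg Quiver.Hom.unop (inv_square h2))

lemma exists_iCycles_eq (K : CochainComplex (ModuleCat.{u} R) ℕ) (n : ℕ) (x : K.X n)
    (hx : K.d n (n + 1) x = 0) : ∃ z : K.cycles n, K.iCycles n z = x := by
  let φ : ModuleCat.of R R ⟶ K.X n := ModuleCat.ofHom (LinearMap.toSpanSingleton R _ x)
  have hφ : φ ≫ K.d n (n + 1) = 0 := by
    ext
    simpa [φ] using hx
  refine ⟨K.liftCycles φ (n + 1) (by simp) hφ (1 : R), ?_⟩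
  refine congr($(K.liftCycles_i φ (n + 1) (by simp) hφ) (1 : R)).trans ?_
  simp [φ]

lemma homologyπ_eq_zero_iff (K : CochainComplex (ModuleCat.{u} R) ℕ) (n : ℕ) (z : K.cycles n) :
    K.homologyπ n z = 0 ↔ ∃ (p : ℕ) (y : K.X p), K.d p n y = K.iCycles n z := by
  have inj : Function.Injective (K.iCycles n) :=
    (ModuleCat.mono_iff_injective (K.iCycles n)).1 inferInstance
  constructor
  · intro h
    have ex := ShortComplex.exact_of_g_is_cokernel (ShortComplex.mk _ _
      (K.toCycles_comp_homologyπ ((ComplexShape.up ℕ).prev n) n)) (K.homologyIsCokernel _ n rfl)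
    rw [ShortComplex.moduleCat_exact_iff] at ex
    obtain ⟨y, hy⟩ := ex z h
    refine ⟨_, y, ?_⟩
    rw [← hy]
    exact congr($(K.toCycles_i _ n) y).symm
  · rintro ⟨p, y, hy⟩
    obtain rfl : K.toCycles p n y = z :=
      inj ((congr($(K.toCycles_i p n) y)).trans hy)
    exact congr($(K.toCycles_comp_homologyπ p n) y)

/-- The cochain `f` on the projective resolution `P` of `X` is a cocycle representing the
class `ξ` in `Ext R (ModuleCat R) n`. -/
def Represents {X Y : ModuleCat.{u} R} (P : ProjectiveResolution X) {n : ℕ}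
    (f : P.complex.X n ⟶ Y) (ξ : ((Ext R (ModuleCat.{u} R) n).obj (op X)).obj Y) : Prop :=
  ∃ z : (P.complex.linearYonedaObj R Y).cycles n,
    (P.complex.linearYonedaObj R Y).iCycles n z = f ∧
      (P.complex.linearYonedaObj R Y).homologyπ n z = (P.isoExt n Y).hom ξ

section Represents

variable {X Y : ModuleCat.{u} R} {P : ProjectiveResolution X} {n : ℕ}
    {f : P.complex.X n ⟶ Y} {ξ : ((Ext R (ModuleCat.{u} R) n).obj (op X)).obj Y}

lemma Represents.d_comp (h : Represents P f ξ) : P.complex.d (n + 1) n ≫ f = 0 := by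
  obtain ⟨z, hz, -⟩ := h
  have := congr($((P.complex.linearYonedaObj R Y).iCycles_d n (n + 1)) z)
  rw [ModuleCat.comp_apply, hz] at this
  exact this

lemma exists_represents (P : ProjectiveResolution X)
    (ξ : ((Ext R (ModuleCat.{u} R) n).obj (op X)).obj Y) :
    ∃ f : P.complex.X n ⟶ Y, Represents P f ξ := by
  obtain ⟨z, hz⟩ := (ModuleCat.epi_iff_surjective
    ((P.complex.linearYonedaObj R Y).homologyπ n)).1 inferInstance ((P.isoExt n Y).hom ξ)
  exact ⟨_, z, rfl, hz⟩

lemma exists_represented (P : ProjectiveResolution X) (f : P.complex.X n ⟶ Y)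
    (hf : P.complex.d (n + 1) n ≫ f = 0) :
    ∃ ξ : ((Ext R (ModuleCat.{u} R) n).obj (op X)).obj Y, Represents P f ξ := by
  obtain ⟨z, hz⟩ := exists_iCycles_eq (P.complex.linearYonedaObj R Y) n f hf
  exact ⟨(P.isoExt n Y).inv ((P.complex.linearYonedaObj R Y).homologyπ n z), z, hz, by simp⟩

lemma Represents.eq_zero_iff (h : Represents P f ξ) :
    ξ = 0 ↔ ∃ (p : ℕ) (g : P.complex.X p ⟶ Y), P.complex.d n p ≫ g = f := by
  obtain ⟨z, rfl, hz⟩ := h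
  have inj : Function.Injective (P.isoExt (R := R) n Y).hom :=
    (ModuleCat.mono_iff_injective _).1 inferInstance
  rw [← map_eq_zero_iff _ inj, ← hz]
  exact homologyπ_eq_zero_iff _ n z

lemma Represents.precomp (h : Represents P f ξ) {X' : ModuleCat.{u} R} {g : X' ⟶ X}
    {P' : ProjectiveResolution X'} (φ : P'.complex ⟶ P.complex)
    (comm : φ.f 0 ≫ P.π.f 0 = P'.π.f 0 ≫ g) :
    Represents P' (φ.f n ≫ f) (((Ext R (ModuleCat.{u} R) n).map g.op).app Y ξ) := by
  obtain ⟨z, rfl, hz⟩ := h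
  refine ⟨HomologicalComplex.cyclesMap (linearYonedaMap φ Y) n z, ?_, ?_⟩
  · exact congr($(HomologicalComplex.cyclesMap_i (linearYonedaMap φ Y) n) z)
  · refine congr($(HomologicalComplex.homologyπ_naturality (linearYonedaMap φ Y) n) z).symm.trans ?_
    refine Eq.trans ?_ congr($(isoExt_hom_naturality g P' P φ comm n Y) ξ).symm
    exact congrArg (HomologicalComplex.homologyMap (linearYonedaMap φ Y) n) hz

end Represents

open Abelian in
lemma extMk_eq_zero_iff {X Y : ModuleCat.{u} R} (P : ProjectiveResolution X) {n : ℕ}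
    (f : P.complex.X n ⟶ Y) (hf : P.complex.d (n + 1) n ≫ f = 0) :
    P.extMk f (n + 1) rfl hf = 0 ↔
      ∃ (p : ℕ) (g : P.complex.X p ⟶ Y), P.complex.d n p ≫ g = f := by
  cases n with
  | zero =>
    have : f = 0 ↔ ∃ (p : ℕ) (g : P.complex.X p ⟶ Y), P.complex.d 0 p ≫ g = f := by
      simp [eq_comm]
    rw [← this]
    refine ⟨fun h ↦ ?_, fun h ↦ by subst h; simp⟩
    rw [← P.extEquivCohomologyClass.apply_eq_iff_eq,
      ProjectiveResolution.extEquivCohomologyClass_extMk,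
      ProjectiveResolution.extEquivCohomologyClass_zero,
      CochainComplex.HomComplex.CohomologyClass.mk_eq_zero_iff,
      CochainComplex.HomComplex.Cocycle.toSingleMk_mem_coboundaries_iff _ _ _ _ _ 1 (by simp)] at h
    obtain ⟨g, hg⟩ := h
    have : IsZero (P.cochainComplex.X 1) := P.cochainComplex.isZero_of_isStrictlyLE 0 1
    rw [this.eq_of_src g 0] at hg
    simpa using hg.symm
  | succ n =>
    rw [P.extMk_eq_zero_iff f (n + 2) rfl hf n rfl]
    refine ⟨fun ⟨g, hg⟩ ↦ ⟨n, g, hg⟩, fun ⟨p, g, hg⟩ ↦ ?_⟩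
    by_cases hp : p = n
    · subst hp; exact ⟨g, hg⟩
    · rw [P.complex.shape _ _ (by simpa using hp)] at hg
      exact ⟨0, by simpa using hg⟩

open Abelian in
lemma Represents.comp_extMk_eq_zero_iff {X Y : ModuleCat.{u} R} {P : ProjectiveResolution X}
    {n : ℕ} {f : P.complex.X n ⟶ Y} {ξ : ((_root_.Ext R (ModuleCat.{u} R) n).obj (op X)).obj Y}
    (h : Represents P f ξ) {X' : ModuleCat.{u} R} (g : X' ⟶ X) :
    (Ext.mk₀ g).comp (P.extMk f (n + 1) rfl h.d_comp) (zero_add n) = 0 ↔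
      ((_root_.Ext R (ModuleCat.{u} R) n).map g.op).app Y ξ = 0 := by
  let P' := projectiveResolution X'
  let φ : ProjectiveResolution.Hom P' P g :=
    ⟨ProjectiveResolution.lift g P' P, ProjectiveResolution.lift_commutes_zero g P' P⟩
  rw [ProjectiveResolution.mk₀_comp_extMk (φ := φ), extMk_eq_zero_iff]
  exact (h.precomp (g := g) φ.hom φ.hom_f_zero_comp_π_f_zero).eq_zero_iff.symm

/-- The `R`-module `R ⧸ I ^ s`. -/
abbrev powQuotient (I : Ideal R) (s : ℕ) : ModuleCat.{u} R := ModuleCat.of R (R ⧸ I ^ s)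

/-- The projection `R ⧸ I ^ s ⟶ R ⧸ I ^ t` for `t ≤ s`. -/
abbrev powQuotientMap (I : Ideal R) {t s : ℕ} (h : t ≤ s) : powQuotient I s ⟶ powQuotient I t :=
  ModuleCat.ofHom (Submodule.mapQ (I ^ s) (I ^ t) LinearMap.id (Ideal.pow_le_pow_right h))

/-- Every class in `Ext i (R ⧸ I ^ t) M` is annihilated by a power of `x` after restriction
to some `R ⧸ I ^ s`; that is, `H^i_I(M)` localized at `x` vanishes. -/
def Vanishes (I : Ideal R) (x : R) (i : ℕ) (M : ModuleCat.{u} R) : Prop :=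
  ∀ (t : ℕ) (ξ : Abelian.Ext (powQuotient I t) M i), ∃ (s : ℕ) (h : t ≤ s) (k : ℕ),
    x ^ k • (Abelian.Ext.mk₀ (powQuotientMap I h)).comp ξ (zero_add i) = 0

lemma vanishes_one_iff_map_eq_zero (I : Ideal R) (i : ℕ) (M : ModuleCat.{u} R) :
    Vanishes I 1 i M ↔
      ∀ (t : ℕ) (ξ : ((Ext R (ModuleCat.{u} R) i).obj (op (powQuotient I t))).obj M),
        ∃ (s : ℕ) (h : t ≤ s),
          ((Ext R (ModuleCat.{u} R) i).map (powQuotientMap I h).op).app M ξ = 0 := by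
  constructor
  · intro hV t ξ
    obtain ⟨f, hf⟩ := exists_represents (projectiveResolution (powQuotient I t)) ξ
    obtain ⟨s, h, k, hk⟩ := hV t (ProjectiveResolution.extMk _ f (i + 1) rfl hf.d_comp)
    rw [one_pow, one_smul] at hk
    exact ⟨s, h, (hf.comp_extMk_eq_zero_iff _).1 hk⟩
  · intro hV t ξ
    obtain ⟨f, hf, rfl⟩ :=
      (projectiveResolution (powQuotient I t)).extMk_surjective ξ (i + 1) rfl
    obtain ⟨ξ, hξ⟩ := exists_represented (projectiveResolution (powQuotient I t)) f hf
    obtain ⟨s, h, hs⟩ := hV t ξ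
    refine ⟨s, h, 0, ?_⟩
    rw [pow_zero, one_smul]
    exact (hξ.comp_extMk_eq_zero_iff _).2 hs

lemma vanishes_one_iff (I : Ideal R) (i : ℕ) (M : ModuleCat.{u} R) :
    Vanishes I 1 i M ↔ Subsingleton ((localCohomology I i).obj M) := by
  rw [vanishes_one_iff_map_eq_zero]
  have := hasColimitDiagram.{u, 0} (idealPowersDiagram I) i
  have : PreservesFilteredColimitsOfSize.{0, 0} (forget (ModuleCat.{u} R)) :=
    preservesSmallestFilteredColimits_of_preservesFilteredColimits.{u, u} _
  have hc : IsColimit (((evaluation _ _).obj M).mapCocone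
      (colimit.cocone (diagram (idealPowersDiagram I) i))) :=
    isColimitOfPreserves ((evaluation _ _).obj M)
      (colimit.isColimit (diagram (idealPowersDiagram I) i))
  constructor
  · intro h
    refine ⟨fun a b ↦ ?_⟩
    suffices H : ∀ a : (localCohomology I i).obj M, a = 0 from (H a).trans (H b).symm
    intro a
    obtain ⟨j, y, rfl⟩ := Concrete.isColimit_exists_rep _ hc a
    obtain ⟨s, hs, e⟩ := h j.unop.unop y
    refine ((Concrete.isColimit_rep_eq_iff_exists _ hc y (0 : _)).2
      ⟨op (op s), (homOfLE hs).op.op, (homOfLE hs).op.op, ?_⟩).trans (map_zero _)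
    exact e.trans (map_zero _).symm
  · intro h t ξ
    obtain ⟨k, f, g, e⟩ := (Concrete.isColimit_rep_eq_iff_exists _ hc (i := op (op t))
      (j := op (op t)) ξ (0 : _)).1 (Subsingleton.elim (α := (localCohomology I i).obj M) _ _)
    refine ⟨k.unop.unop, leOfHom f.unop.unop, e.trans (map_zero _)⟩

lemma powQuotientMap_comp (I : Ideal R) {r s t : ℕ} (h : r ≤ s) (h' : s ≤ t) :
    powQuotientMap I h' ≫ powQuotientMap I h = powQuotientMap I (h.trans h') := by
  ext
  rfl

section Exact

open Abelian

variable {I : Ideal R} {x : R}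

lemma vanishes_of_exact {M₁ M₂ M₃ : ModuleCat.{u} R} {i₁ i₂ i₃ a b : ℕ} (α : Ext M₁ M₂ a)
    (β : Ext M₂ M₃ b) (ha : i₁ + a = i₂) (hb : i₂ + b = i₃)
    (hex : ∀ (X : ModuleCat.{u} R) (ξ : Ext X M₂ i₂), ξ.comp β hb = 0 →
      ∃ η : Ext X M₁ i₁, η.comp α ha = ξ)
    (h₁ : Vanishes I x i₁ M₁) (h₃ : Vanishes I x i₃ M₃) : Vanishes I x i₂ M₂ := by
  intro t ξ
  obtain ⟨s, hs, k, hk⟩ := h₃ t (ξ.comp β hb)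
  rw [← Ext.comp_assoc _ _ _ (zero_add i₂) hb (by lia), ← Ext.smul_comp] at hk
  obtain ⟨η, hη⟩ := hex _ _ hk
  obtain ⟨s', hs', k', hk'⟩ := h₁ s η
  refine ⟨s', hs.trans hs', k' + k, ?_⟩
  rw [← powQuotientMap_comp I hs hs', ← Ext.mk₀_comp_mk₀_assoc, pow_add, mul_smul,
    ← Ext.comp_smul, ← hη, ← Ext.comp_assoc _ _ _ (zero_add i₁) ha (by lia), ← Ext.smul_comp,
    hk', Ext.zero_comp]

variable {S : ShortComplex (ModuleCat.{u} R)} {i : ℕ}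

lemma Vanishes.middle (hS : S.ShortExact) (h₁ : Vanishes I x i S.X₁) (h₃ : Vanishes I x i S.X₃) :
    Vanishes I x i S.X₂ :=
  vanishes_of_exact (Ext.mk₀ S.f) (Ext.mk₀ S.g) (add_zero i) (add_zero i)
    (fun _ ξ h ↦ Ext.covariant_sequence_exact₂ _ hS ξ h) h₁ h₃

lemma Vanishes.left (hS : S.ShortExact) (h₃ : Vanishes I x i S.X₃)
    (h₂ : Vanishes I x (i + 1) S.X₂) :
    Vanishes I x (i + 1) S.X₁ :=
  vanishes_of_exact hS.extClass (Ext.mk₀ S.f) rfl (add_zero _)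
    (fun _ ξ h ↦ Ext.covariant_sequence_exact₁ _ hS ξ h rfl) h₃ h₂

lemma Vanishes.right (hS : S.ShortExact) (h₂ : Vanishes I x i S.X₂)
    (h₁ : Vanishes I x (i + 1) S.X₁) :
    Vanishes I x i S.X₃ :=
  vanishes_of_exact (Ext.mk₀ S.g) hS.extClass (add_zero _) rfl
    (fun _ ξ h ↦ Ext.covariant_sequence_exact₃ _ hS ξ rfl h) h₂ h₁

end Exact

lemma vanishes_of_injective (I : Ideal R) (x : R) (i : ℕ) (E : ModuleCat.{u} R) [Injective E] :
    Vanishes I x (i + 1) E := fun t ξ ↦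
  ⟨t, le_rfl, 0, by rw [Abelian.Ext.eq_zero_of_injective ξ, Abelian.Ext.comp_zero, smul_zero]⟩

lemma vanishes_succ_iff {S : ShortComplex (ModuleCat.{u} R)} (hS : S.ShortExact) [Injective S.X₂]
    (I : Ideal R) (x : R) (i : ℕ) :
    Vanishes I x (i + 2) S.X₁ ↔ Vanishes I x (i + 1) S.X₃ :=
  ⟨.right hS (vanishes_of_injective I x i S.X₂),
    fun h ↦ .left hS h (vanishes_of_injective I x (i + 1) S.X₂)⟩

lemma exists_shortExact_injective (M : ModuleCat.{u} R) :
    ∃ (E C : ModuleCat.{u} R) (f : M ⟶ E) (g : E ⟶ C) (w : f ≫ g = 0),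
      Injective E ∧ (ShortComplex.mk f g w).ShortExact :=
  ⟨Injective.under M, cokernel (Injective.ι M), Injective.ι M, cokernel.π _, cokernel.condition _,
    inferInstance, { exact := ShortComplex.exact_cokernel _ }⟩

lemma Vanishes.of_smul_eq_zero {I : Ideal R} {a : R} {M : ModuleCat.{u} R}
    (ha : ∀ m : M, a • m = 0) (i : ℕ) : Vanishes I a i M := by
  refine fun t ξ ↦ ⟨t, le_rfl, 1, ?_⟩
  have : a • 𝟙 M = 0 := by
    ext m
    exact ha m
  rw [pow_one, Abelian.Ext.smul_eq_comp_mk₀, this]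
  simp

/-- The submodule of elements of `M` annihilated by some power of `I`. -/
def powTorsion (I : Ideal R) (M : Type u) [AddCommGroup M] [Module R M] : Submodule R M where
  carrier := {m | ∃ t : ℕ, ∀ a ∈ I ^ t, a • m = 0}
  zero_mem' := ⟨0, fun _ _ ↦ smul_zero _⟩
  add_mem' := by
    rintro m m' ⟨t, ht⟩ ⟨t', ht'⟩
    refine ⟨max t t', fun a ha ↦ ?_⟩
    rw [smul_add, ht a (Ideal.pow_le_pow_right (le_max_left ..) ha),
      ht' a (Ideal.pow_le_pow_right (le_max_right ..) ha), add_zero]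
  smul_mem' := by
    rintro r m ⟨t, ht⟩
    exact ⟨t, fun a ha ↦ by rw [smul_comm, ht a ha, smul_zero]⟩

section PowTorsion

variable {I : Ideal R} {M N : Type u} [AddCommGroup M] [Module R M] [AddCommGroup N] [Module R N]

lemma powTorsion_antitone {J : Ideal R} (h : I ≤ J) : powTorsion J M ≤ powTorsion I M :=
  fun _ ⟨t, ht⟩ ↦ ⟨t, fun a ha ↦ ht a (Ideal.pow_right_mono h t ha)⟩

lemma map_mem_powTorsion (f : M →ₗ[R] N) {m : M} (hm : m ∈ powTorsion I M) :
    f m ∈ powTorsion I N := by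
  obtain ⟨t, ht⟩ := hm
  exact ⟨t, fun a ha ↦ by rw [← map_smul, ht a ha, map_zero]⟩

lemma mem_powTorsion_of_map {f : M →ₗ[R] N} (hf : Function.Injective f) {m : M}
    (hm : f m ∈ powTorsion I N) : m ∈ powTorsion I M := by
  obtain ⟨t, ht⟩ := hm
  exact ⟨t, fun a ha ↦ hf (by rw [map_smul, ht a ha, map_zero])⟩

lemma mem_powTorsion_sup_span_singleton {x : R} {m : M} :
    m ∈ powTorsion (I ⊔ Ideal.span {x}) M ↔ m ∈ powTorsion I M ∧ ∃ k : ℕ, x ^ k • m = 0 := by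
  constructor
  · intro h
    refine ⟨powTorsion_antitone le_sup_left h, ?_⟩
    obtain ⟨t, ht⟩ := h
    exact ⟨t, ht _ (Ideal.pow_mem_pow (Ideal.mem_sup_right (Ideal.mem_span_singleton_self x)) t)⟩
  · rintro ⟨⟨t, ht⟩, k, hk⟩
    refine ⟨t + k, fun a ha ↦ ?_⟩
    obtain ⟨b, hb, c, hc, rfl⟩ := Submodule.mem_sup.1 (Ideal.sup_pow_add_le_pow_sup_pow ha)
    rw [Ideal.span_singleton_pow, Ideal.mem_span_singleton'] at hc
    obtain ⟨r, rfl⟩ := hc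
    rw [add_smul, ht b hb, mul_smul, hk, smul_zero, add_zero]

end PowTorsion

/-- The morphism from `R ⧸ I ^ t` determined by an element annihilated by `I ^ t`. -/
abbrev ofPowTorsion {I : Ideal R} {M : ModuleCat.{u} R} (m : M) {t : ℕ}
    (hm : ∀ a ∈ I ^ t, a • m = 0) : powQuotient I t ⟶ M :=
  ModuleCat.ofHom ((I ^ t).liftQ (LinearMap.toSpanSingleton R M m) fun a ha ↦ hm a ha)

lemma ofPowTorsion_apply_one {I : Ideal R} {M : ModuleCat.{u} R} (m : M) {t : ℕ}
    (hm : ∀ a ∈ I ^ t, a • m = 0) : ofPowTorsion m hm (Ideal.Quotient.mk (I ^ t) 1) = m :=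
  one_smul R m

lemma powQuotient_hom_ext {I : Ideal R} {M : ModuleCat.{u} R} {t : ℕ} {f g : powQuotient I t ⟶ M}
    (h : f (Ideal.Quotient.mk (I ^ t) 1) = g (Ideal.Quotient.mk (I ^ t) 1)) : f = g := by
  ext
  exact h

lemma smul_hom_apply_one {I : Ideal R} {M : ModuleCat.{u} R} {t : ℕ} (f : powQuotient I t ⟶ M)
    {a : R} (ha : a ∈ I ^ t) : a • f (Ideal.Quotient.mk (I ^ t) 1) = 0 := by
  rw [← map_smul]
  have : a • (Ideal.Quotient.mk (I ^ t) 1) = 0 := by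
    rw [Algebra.smul_def, map_one, mul_one]
    exact Ideal.Quotient.eq_zero_iff_mem.2 ha
  exact (congrArg f this).trans (map_zero _)

lemma vanishes_zero_iff {I : Ideal R} {x : R} {M : ModuleCat.{u} R} :
    Vanishes I x 0 M ↔ ∀ m ∈ powTorsion I M, ∃ k : ℕ, x ^ k • m = 0 := by
  constructor
  · rintro h m ⟨t, ht⟩
    obtain ⟨s, hs, k, hk⟩ := h t (Abelian.Ext.mk₀ (ofPowTorsion m ht))
    refine ⟨k, ?_⟩
    rw [Abelian.Ext.mk₀_comp_mk₀, ← Abelian.Ext.mk₀_smul, Abelian.Ext.mk₀_eq_zero_iff] at hk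
    have := congr($hk (Ideal.Quotient.mk (I ^ s) 1))
    exact (congrArg (x ^ k • ·) (ofPowTorsion_apply_one m ht)).symm.trans this
  · intro h t ξ
    obtain ⟨f, rfl⟩ := (Abelian.Ext.mk₀_bijective _ _).2 ξ
    obtain ⟨k, hk⟩ := h (f (Ideal.Quotient.mk (I ^ t) 1)) ⟨t, fun a ha ↦ smul_hom_apply_one f ha⟩
    refine ⟨t, le_rfl, k, ?_⟩
    rw [Abelian.Ext.mk₀_comp_mk₀, ← Abelian.Ext.mk₀_smul, Abelian.Ext.mk₀_eq_zero_iff]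
    exact powQuotient_hom_ext hk

lemma vanishes_one_iff_lift {S : ShortComplex (ModuleCat.{u} R)} (hS : S.ShortExact)
    [Injective S.X₂] {I : Ideal R} {x : R} :
    Vanishes I x 1 S.X₁ ↔
      ∀ c ∈ powTorsion I S.X₃, ∃ k : ℕ, ∃ e ∈ powTorsion I S.X₂, S.g e = x ^ k • c := by
  constructor
  · rintro h c ⟨t, ht⟩
    obtain ⟨s, hs, k, hk⟩ := h t ((Abelian.Ext.mk₀ (ofPowTorsion c ht)).comp hS.extClass
      (zero_add 1))
    rw [Abelian.Ext.mk₀_comp_mk₀_assoc, ← Abelian.Ext.smul_comp, ← Abelian.Ext.mk₀_smul] at hk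
    obtain ⟨ξ, hξ⟩ := Abelian.Ext.covariant_sequence_exact₃ _ hS _ _ hk
    obtain ⟨f, rfl⟩ := (Abelian.Ext.mk₀_bijective _ _).2 ξ
    rw [Abelian.Ext.mk₀_comp_mk₀, (Abelian.Ext.mk₀_bijective _ _).1.eq_iff] at hξ
    refine ⟨k, f (Ideal.Quotient.mk (I ^ s) 1), ⟨s, fun a ha ↦ smul_hom_apply_one f ha⟩, ?_⟩
    have := congr($hξ (Ideal.Quotient.mk (I ^ s) 1))
    exact this.trans (congrArg (x ^ k • ·) (ofPowTorsion_apply_one c ht))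
  · intro h t ξ
    obtain ⟨η, rfl⟩ := Abelian.Ext.covariant_sequence_exact₁ _ hS ξ
      (Abelian.Ext.eq_zero_of_injective _) (zero_add 1)
    obtain ⟨f, rfl⟩ := (Abelian.Ext.mk₀_bijective _ _).2 η
    obtain ⟨k, e, ⟨s, hs⟩, he⟩ := h (f (Ideal.Quotient.mk (I ^ t) 1))
      ⟨t, fun a ha ↦ smul_hom_apply_one f ha⟩
    have hs' : ∀ a ∈ I ^ max s t, a • e = 0 := fun a ha ↦
      hs a (Ideal.pow_le_pow_right (le_max_left ..) ha)
    refine ⟨max s t, le_max_right .., k, ?_⟩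
    have key : x ^ k • (powQuotientMap I (le_max_right s t) ≫ f) = ofPowTorsion e hs' ≫ S.g := by
      refine powQuotient_hom_ext (Eq.symm (Eq.trans ?_ he))
      exact congrArg S.g (ofPowTorsion_apply_one e hs')
    rw [Abelian.Ext.mk₀_comp_mk₀_assoc, ← Abelian.Ext.smul_comp, ← Abelian.Ext.mk₀_smul, key,
      ← Abelian.Ext.mk₀_comp_mk₀_assoc, hS.comp_extClass, Abelian.Ext.comp_zero]

lemma exists_pow_smul_eq_zero_of_finite [IsNoetherianRing R] (I : Ideal R) {N M : Type u}
    [AddCommGroup N] [Module R N] [Module.Finite R N] [AddCommGroup M] [Module R M]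
    (g : N →ₗ[R] M) (hg : ∀ y, g y ∈ powTorsion I M) :
    ∃ t : ℕ, ∀ y, ∀ a ∈ I ^ t, a • g y = 0 := by
  let F : ℕ →o Submodule R N :=
    { toFun := fun t ↦
        { carrier := {y | ∀ a ∈ I ^ t, a • g y = 0}
          zero_mem' := fun a _ ↦ by rw [map_zero, smul_zero]
          add_mem' := fun {y z} hy hz a ha ↦ by rw [map_add, smul_add, hy a ha, hz a ha, add_zero]
          smul_mem' := fun r y hy a ha ↦ by rw [map_smul, smul_comm, hy a ha, smul_zero] }
      monotone' := fun t s h y hy a ha ↦ hy a (Ideal.pow_le_pow_right h ha) }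
  obtain ⟨t, ht⟩ := monotone_stabilizes_iff_noetherian.2 (inferInstanceAs (IsNoetherian R N)) F
  refine ⟨t, fun y ↦ ?_⟩
  obtain ⟨s, hs⟩ := hg y
  have : y ∈ F (max t s) := F.monotone (le_max_right t s) hs
  rw [← ht _ (le_max_left t s)] at this
  exact this

lemma injective_powTorsion [IsNoetherianRing R] (I : Ideal R) (E : Type u) [AddCommGroup E]
    [Module R E] [Module.Injective R E] : Module.Injective R (powTorsion I E) := by
  refine Module.Baer.iff_injective.1 fun J g ↦ ?_
  obtain ⟨t, ht⟩ := exists_pow_smul_eq_zero_of_finite I ((powTorsion I E).subtype ∘ₗ g)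
    fun y ↦ (g y).2
  obtain ⟨k, hk⟩ := I.exists_pow_inf_eq_pow_smul J
  have hle : ∀ y : J, (y : R) ∈ I ^ (k + t) → g y = 0 := by
    intro y hy
    have hy' : (y : R) ∈ I ^ t • J := by
      have : (y : R) ∈ I ^ (k + t) • (⊤ : Submodule R R) ⊓ J := ⟨by simpa using hy, y.2⟩
      rw [hk (k + t) (by lia), Nat.add_sub_cancel_left] at this
      exact Submodule.smul_mono le_rfl inf_le_right this
    have key : ∀ z ∈ I ^ t • J, ∃ hzJ : z ∈ J, g ⟨z, hzJ⟩ = 0 := by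
      intro z hz
      refine Submodule.smul_induction_on hz (fun a ha b hb ↦ ?_) fun b c hb hc ↦ ?_
      · refine ⟨J.smul_mem a hb, Subtype.ext ?_⟩
        refine Eq.trans ?_ (ht ⟨b, hb⟩ a ha)
        exact congrArg Subtype.val (g.map_smul a ⟨b, hb⟩)
      · obtain ⟨hb, hb'⟩ := hb
        obtain ⟨hc, hc'⟩ := hc
        refine ⟨J.add_mem hb hc, ?_⟩
        refine (g.map_add ⟨b, hb⟩ ⟨c, hc⟩).trans ?_
        rw [hb', hc', add_zero]
    exact (key y hy').2
  let f : J →ₗ[R] R ⧸ I ^ (k + t) := (I ^ (k + t)).mkQ ∘ₗ J.subtype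
  have hf : ∀ y ∈ LinearMap.ker f, g y = 0 := fun y hy ↦
    hle y ((Submodule.Quotient.mk_eq_zero _).1 hy)
  obtain ⟨h, hh⟩ := Module.Injective.out ((LinearMap.ker f).liftQ f le_rfl)
    (LinearMap.ker_eq_bot.1 (Submodule.ker_liftQ_eq_bot _ _ _ le_rfl))
    ((LinearMap.ker f).liftQ ((powTorsion I E).subtype ∘ₗ g) fun y hy ↦ by
      simp [hf y hy])
  let e : powTorsion I E := ⟨h (Submodule.Quotient.mk 1), k + t, fun a ha ↦ by
    rw [← map_smul, ← Submodule.Quotient.mk_smul, (Submodule.Quotient.mk_eq_zero _).2, map_zero]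
    simpa using ha⟩
  refine ⟨LinearMap.toSpanSingleton R _ e, fun y hy ↦ Subtype.ext ?_⟩
  refine Eq.trans ?_ (hh (Submodule.Quotient.mk ⟨y, hy⟩))
  refine (map_smul h y (Submodule.Quotient.mk 1)).symm.trans ?_
  rw [← Submodule.Quotient.mk_smul, smul_eq_mul, mul_one]
  rfl

lemma exists_pow_smul_eq_of_injective [IsNoetherianRing R] {K : Type u} [AddCommGroup K]
    [Module R K] [Module.Injective R K] (x : R) (w : K) (k : ℕ) :
    ∃ (l : ℕ) (w' : K), x ^ (k + l) • w' = x ^ l • w := by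
  let F : ℕ →o Submodule R R :=
    { toFun := fun l ↦ LinearMap.ker (LinearMap.mulLeft R (x ^ l))
      monotone' := fun l m h r hr ↦ by
        rw [LinearMap.mem_ker, LinearMap.mulLeft_apply] at hr ⊢
        rw [← Nat.sub_add_cancel h, pow_add, mul_assoc, hr, mul_zero] }
  obtain ⟨l, hl⟩ := monotone_stabilizes_iff_noetherian.2 (inferInstanceAs (IsNoetherian R R)) F
  let f := LinearMap.mulLeft R (x ^ (k + l))
  have hf : ∀ r ∈ LinearMap.ker f, x ^ l * r = 0 := fun r hr ↦ by
    have : r ∈ F (k + l) := hr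
    rw [← hl _ (by lia)] at this
    exact this
  obtain ⟨h, hh⟩ := Module.Injective.out ((LinearMap.ker f).liftQ f le_rfl)
    (LinearMap.ker_eq_bot.1 (Submodule.ker_liftQ_eq_bot _ _ _ le_rfl))
    ((LinearMap.ker f).liftQ (LinearMap.toSpanSingleton R K (x ^ l • w)) fun r hr ↦ by
      rw [LinearMap.mem_ker, LinearMap.toSpanSingleton_apply, smul_smul, mul_comm, hf r hr,
        zero_smul])
  refine ⟨l, h 1, ?_⟩
  have key : h (x ^ (k + l) * 1) = (1 : R) • x ^ l • w := hh (Submodule.Quotient.mk 1)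
  rwa [← smul_eq_mul, map_smul, one_smul] at key

lemma shortExact_range_mkQ {M N : Type u} [AddCommGroup M] [Module R M] [AddCommGroup N]
    [Module R N] (f : M →ₗ[R] N) (hf : Function.Injective f) :
    (ShortComplex.mk (ModuleCat.ofHom f) (ModuleCat.ofHom (LinearMap.range f).mkQ)
      (by ext; simp)).ShortExact :=
  ModuleCat.shortComplex_shortExact _ (LinearMap.exact_map_mkQ_range f) hf
    (Submodule.mkQ_surjective _)

lemma exists_shortExact_injective_powTorsion [IsNoetherianRing R] {I : Ideal R}
    {N : ModuleCat.{u} R} (hN : ∀ m : N, m ∈ powTorsion I N) :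
    ∃ (E C : ModuleCat.{u} R) (f : N ⟶ E) (g : E ⟶ C) (w : f ≫ g = 0),
      Injective E ∧ (ShortComplex.mk f g w).ShortExact ∧ ∀ e : E, e ∈ powTorsion I E := by
  obtain ⟨E, _, f, _, _, _, hS⟩ := exists_shortExact_injective N
  have : Module.Injective R E := (Module.injective_iff_injective_object R E).2 ‹_›
  have := injective_powTorsion I E
  let f' : N →ₗ[R] powTorsion I E := f.hom.codRestrict _ fun m ↦ map_mem_powTorsion f.hom (hN m)
  have hf' : Function.Injective f' := fun a b h ↦
    hS.moduleCat_injective_f (congrArg Subtype.val h)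
  exact ⟨_, _, _, _, _, (Module.injective_iff_injective_object R _).1 this,
    shortExact_range_mkQ f' hf',
    fun e ↦ mem_powTorsion_of_map (f := (powTorsion I E).subtype) Subtype.val_injective e.2⟩

lemma vanishes_succ_of_powTorsion [IsNoetherianRing R] {I : Ideal R} (x : R) (i : ℕ)
    {N : ModuleCat.{u} R} (hN : ∀ m : N, m ∈ powTorsion I N) : Vanishes I x (i + 1) N := by
  induction i generalizing N with
  | zero =>
    obtain ⟨E, C, f, g, w, _, hS, hE⟩ := exists_shortExact_injective_powTorsion hN
    refine (vanishes_one_iff_lift hS).2 fun c _ ↦ ?_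
    obtain ⟨e, rfl⟩ := hS.moduleCat_surjective_g c
    exact ⟨0, e, hE e, by simp⟩
  | succ i ih =>
    obtain ⟨E, C, f, g, w, _, hS, hE⟩ := exists_shortExact_injective_powTorsion hN
    refine (vanishes_succ_iff hS I x i).2 (ih fun c ↦ ?_)
    obtain ⟨e, rfl⟩ := hS.moduleCat_surjective_g c
    exact map_mem_powTorsion g.hom (hE e)

lemma exists_eq_of_map_eq_zero {S : ShortComplex (ModuleCat.{u} R)} (hS : S.ShortExact)
    {y : S.X₂} (hy : S.g y = 0) : ∃ m : S.X₁, S.f m = y :=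
  (ShortComplex.moduleCat_exact_iff S).1 hS.exact y hy

lemma Vanishes.one_sup_span_singleton {I : Ideal R} {x : R} {M : ModuleCat.{u} R}
    (h₀ : Vanishes I x 0 M) (h₁ : Vanishes I 1 1 M) :
    Vanishes (I ⊔ Ideal.span {x}) 1 1 M := by
  obtain ⟨E, C, f, g, w, _, hS⟩ := exists_shortExact_injective M
  refine (vanishes_one_iff_lift hS).2 fun c hc ↦ ?_
  obtain ⟨hc, k, hk⟩ := mem_powTorsion_sup_span_singleton.1 hc
  obtain ⟨_, e, he, hge⟩ := (vanishes_one_iff_lift hS).1 h₁ c hc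
  rw [one_pow, one_smul] at hge
  obtain ⟨m, hm⟩ := exists_eq_of_map_eq_zero hS (y := x ^ k • e)
    (by rw [map_smul, hge, hk])
  obtain ⟨l, hl⟩ := vanishes_zero_iff.1 h₀ m (mem_powTorsion_of_map (f := f.hom)
    hS.moduleCat_injective_f (by
      have := (powTorsion I E).smul_mem (x ^ k) he
      rw [← hm] at this
      exact this))
  refine ⟨0, e, mem_powTorsion_sup_span_singleton.2 ⟨he, l + k, ?_⟩, by simpa using hge⟩
  rw [pow_add, mul_smul, ← hm, ← map_smul, hl, map_zero]

lemma Vanishes.two_sup_span_singleton [IsNoetherianRing R] {I : Ideal R} {x : R}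
    {M : ModuleCat.{u} R} (h₁ : Vanishes I x 1 M) (h₂ : Vanishes I 1 2 M) :
    Vanishes (I ⊔ Ideal.span {x}) 1 2 M := by
  obtain ⟨E, C, f, g, w, _, hS⟩ := exists_shortExact_injective M
  obtain ⟨E', C', f', g', w', _, hS'⟩ := exists_shortExact_injective C
  have : Module.Injective R E := (Module.injective_iff_injective_object R E).2 ‹_›
  have := injective_powTorsion I E
  replace h₂ := (vanishes_succ_iff hS I 1 0).1 h₂
  refine (vanishes_succ_iff hS _ 1 0).2 ((vanishes_one_iff_lift hS').2 fun c hc ↦ ?_)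
  obtain ⟨hc, k, hk⟩ := mem_powTorsion_sup_span_singleton.1 hc
  obtain ⟨_, y, hy, hgy⟩ := (vanishes_one_iff_lift hS').1 h₂ c hc
  rw [one_pow, one_smul] at hgy
  obtain ⟨d, hd⟩ := exists_eq_of_map_eq_zero hS' (y := x ^ k • y)
    (by rw [map_smul, hgy, hk])
  obtain ⟨j, w, hw, hgw⟩ := (vanishes_one_iff_lift hS).1 h₁ d (mem_powTorsion_of_map (f := f'.hom)
    hS'.moduleCat_injective_f (by
      have := (powTorsion I E').smul_mem (x ^ k) hy
      rw [← hd] at this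
      exact this))
  obtain ⟨l, v, hv⟩ := exists_pow_smul_eq_of_injective (K := powTorsion I E) x ⟨w, hw⟩ (j + k)
  replace hv := congrArg Subtype.val hv
  have hv' : x ^ (j + k + l) • v.1 = x ^ l • w := hv
  refine ⟨0, y - f' (g v.1), mem_powTorsion_sup_span_singleton.2
    ⟨Submodule.sub_mem _ hy (map_mem_powTorsion f'.hom (map_mem_powTorsion g.hom v.2)),
      j + k + l, ?_⟩, ?_⟩
  · have e₁ : f' (g w) = x ^ (j + k) • y := by
      refine (congrArg f' hgw).trans ?_
      rw [map_smul, pow_add, mul_smul]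
      exact congrArg (x ^ j • ·) hd
    rw [smul_sub, ← map_smul, ← map_smul, hv', map_smul, map_smul, e₁, smul_smul, ← pow_add,
      add_comm l, sub_self]
  · rw [pow_zero, one_smul]
    refine (map_sub g'.hom y _).trans ?_
    have : g' (f' (g v.1)) = 0 := congr($w' (g v.1))
    exact (congrArg (g' y - ·) this).trans ((sub_zero _).trans hgy)

lemma Vanishes.succ_sup_span_singleton [IsNoetherianRing R] {I : Ideal R} {x : R} {i : ℕ}
    {M : ModuleCat.{u} R} (h : Vanishes I x i M) (h' : Vanishes I 1 (i + 1) M) :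
    Vanishes (I ⊔ Ideal.span {x}) 1 (i + 1) M := by
  induction i using Nat.twoStepInduction generalizing M with
  | zero => exact h.one_sup_span_singleton h'
  | one => exact h.two_sup_span_singleton h'
  | more i _ ih =>
    obtain ⟨E, C, f, g, w, _, hS⟩ := exists_shortExact_injective M
    exact (vanishes_succ_iff hS _ 1 (i + 1)).2
      (ih ((vanishes_succ_iff hS I x i).1 h) ((vanishes_succ_iff hS I 1 (i + 1)).1 h'))

lemma Vanishes.zero_of_le {I J : Ideal R} (hIJ : I ≤ J) {x : R} {M : ModuleCat.{u} R}
    (h : Vanishes I x 0 M) : Vanishes J x 0 M :=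
  vanishes_zero_iff.2 fun m hm ↦ vanishes_zero_iff.1 h m (powTorsion_antitone hIJ hm)

/-- Enlarging `I` by elements annihilating `M` preserves the vanishing of `H^i_I(M)`. -/
lemma Vanishes.sup_annihilator [IsNoetherianRing R] {I : Ideal R} {i : ℕ} {M : ModuleCat.{u} R}
    (h : Vanishes I 1 i M) : Vanishes (I ⊔ Module.annihilator R M) 1 i M := by
  suffices H : ∀ J : Ideal R, J.FG → J ≤ Module.annihilator R M → Vanishes (I ⊔ J) 1 i M from
    H _ (IsNoetherian.noetherian _) le_rfl
  intro J hJ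
  induction J, hJ using Submodule.fg_induction generalizing I with
  | singleton a =>
    intro ha
    cases i with
    | zero => exact h.zero_of_le le_sup_left
    | succ i =>
      refine Vanishes.succ_sup_span_singleton (.of_smul_eq_zero ?_ i) h
      exact Module.mem_annihilator.1 (ha (Ideal.mem_span_singleton_self a))
  | sup J₁ J₂ _ _ h₁ h₂ =>
    intro hJ
    rw [← sup_assoc]
    exact h₂ (h₁ h (le_sup_left.trans hJ)) (le_sup_right.trans hJ)

lemma vanishes_one_of_subsingleton (I : Ideal R) (i : ℕ) (M : ModuleCat.{u} R) [Subsingleton M] :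
    Vanishes I 1 i M :=
  .of_smul_eq_zero (fun _ ↦ Subsingleton.elim _ _) i

open Abelian in
lemma smul_ext_powQuotient_eq_zero {I : Ideal R} {t i : ℕ} {M : ModuleCat.{u} R} {a : R}
    (ha : a ∈ I ^ t) (ξ : Ext (powQuotient I t) M i) : a • ξ = 0 := by
  have h : a • 𝟙 (powQuotient I t) = 0 :=
    powQuotient_hom_ext ((smul_hom_apply_one (𝟙 _) ha).trans rfl)
  rw [← Ext.mk₀_id_comp ξ, ← Ext.smul_comp, ← Ext.mk₀_smul, h, Ext.mk₀_zero, Ext.zero_comp]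

open Abelian in
lemma exists_smul_comp_eq_zero {I : Ideal R} {x : R} {t i j a : ℕ} {M N : ModuleCat.{u} R}
    {η : Ext (powQuotient I t) M i} (α : Ext M N a) (hj : i + a = j)
    (hη : ∃ (s : ℕ) (h : t ≤ s) (k : ℕ),
      x ^ k • (Ext.mk₀ (powQuotientMap I h)).comp η (zero_add i) = 0) :
    ∃ (s : ℕ) (h : t ≤ s) (k : ℕ),
      x ^ k • (Ext.mk₀ (powQuotientMap I h)).comp (η.comp α hj) (zero_add j) = 0 := by
  obtain ⟨s, hs, k, hk⟩ := hη
  refine ⟨s, hs, k, ?_⟩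
  rw [← Ext.comp_assoc _ _ _ (zero_add i) hj (by lia), ← Ext.smul_comp, hk, Ext.zero_comp]

lemma vanishes_of_regular [IsNoetherianRing R] {I : Ideal R} {x : R} (hx : x ∈ I)
    {N : ModuleCat.{u} R} (reg : IsSMulRegular N x) {i : ℕ}
    (h : ∀ t : ℕ, Vanishes I 1 i (ModuleCat.of R (QuotSMulTop (x ^ t) N))) :
    Vanishes I 1 (i + 1) N := by
  intro t ξ
  have hS := (reg.pow t).smulShortComplex_shortExact
  have h0 : ξ.comp (Abelian.Ext.mk₀ (x ^ t • 𝟙 N)) (add_zero (i + 1)) = 0 := by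
    rw [← Abelian.Ext.smul_eq_comp_mk₀, smul_ext_powQuotient_eq_zero (Ideal.pow_mem_pow hx t)]
  obtain ⟨η, rfl⟩ := Abelian.Ext.covariant_sequence_exact₁ _ hS ξ h0 rfl
  exact exists_smul_comp_eq_zero hS.extClass rfl (h t t η)

lemma vanishes_of_finite_of_supportDim_lt [IsNoetherianRing R] (I : Ideal R) {n i : ℕ}
    (N : ModuleCat.{u} R) [Module.Finite R N] (hN : Module.supportDim R N < n) (hi : n ≤ i) :
    Vanishes I 1 i N := by
  induction n generalizing N i with
  | zero =>
    have : Subsingleton N := by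
      rw [← Module.supportDim_eq_bot_iff_subsingleton R]
      exact WithBot.lt_coe_bot.1 hN
    exact vanishes_one_of_subsingleton I i N
  | succ n ih =>
    obtain ⟨i, rfl⟩ : ∃ j, i = j + 1 := ⟨i - 1, by lia⟩
    refine IsNoetherianRing.induction_on_isQuotientEquivQuotientPrime R (M := N)
      inferInstance (motive := fun N _ _ _ ↦ Module.supportDim R N < (n + 1 : ℕ) →
        Vanishes I 1 (i + 1) (ModuleCat.of R N)) ?_ ?_ ?_ hN
    · intro N _ _ _ _ _
      exact vanishes_one_of_subsingleton I _ _
    · intro N _ _ _ p e hN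
      by_cases hp : I ≤ p.asIdeal
      · refine vanishes_succ_of_powTorsion 1 i fun m ↦ ⟨1, fun a ha ↦ e.injective ?_⟩
        obtain ⟨r, hr⟩ := Ideal.Quotient.mk_surjective (e m)
        refine (e.map_smul a m).trans ?_
        rw [← hr, map_zero, Algebra.smul_def]
        refine (map_mul (Ideal.Quotient.mk p.asIdeal) a r).symm.trans ?_
        exact Ideal.Quotient.eq_zero_iff_mem.2 (Ideal.mul_mem_right _ _ (hp (by simpa using ha)))
      · obtain ⟨x, hxI, hxp⟩ := SetLike.not_le_iff_exists.1 hp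
        have reg : IsSMulRegular N x := by
          rw [e.isSMulRegular_congr, isSMulRegular_iff_right_eq_zero_of_smul]
          intro a ha
          rw [Algebra.smul_def, mul_eq_zero] at ha
          exact ha.resolve_left fun h ↦ hxp (Ideal.Quotient.eq_zero_iff_mem.1 h)
        refine vanishes_of_regular hxI reg fun t ↦ ih _ ?_ (by lia)
        have := Module.supportDim_quotSMulTop_succ_le_of_notMem_minimalPrimes
          fun p hp ↦ (reg.pow t).notMem_of_mem_minimalPrimes hp
        by_contra! hlt
        refine absurd (this.trans_lt hN) (not_lt.2 ?_)
        push_cast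
        gcongr
    · intro N₁ _ _ _ N₂ _ _ _ N₃ _ _ _ f g hf hg hfg h₁ h₃ hN
      exact Vanishes.middle (ModuleCat.shortComplex_shortExact
        (ShortComplex.mk (ModuleCat.ofHom f) (ModuleCat.ofHom g)
          (by ext m; exact hfg.apply_apply_eq_zero m)) hfg hf hg)
        (h₁ ((Module.supportDim_le_of_injective f hf).trans_lt hN))
        (h₃ ((Module.supportDim_le_of_surjective g hg).trans_lt hN))

open Abelian in
/-- Over a Noetherian ring, extensions of a finite module by `M` are defined over finite
submodules of `M`. -/
lemma exists_comp_subtype_eq [IsNoetherianRing R] {A M : ModuleCat.{u} R} [Module.Finite R A]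
    {i : ℕ} (ξ : Ext A M i) :
    ∃ (N : Submodule R M) (_ : N.FG) (η : Ext A (ModuleCat.of R N) i),
      η.comp (Ext.mk₀ (ModuleCat.ofHom N.subtype)) (add_zero i) = ξ := by
  induction i generalizing A with
  | zero =>
    obtain ⟨f, rfl⟩ := (Ext.mk₀_bijective _ _).2 ξ
    refine ⟨LinearMap.range f.hom, Module.Finite.iff_fg.1 inferInstance,
      Ext.mk₀ (ModuleCat.ofHom f.hom.rangeRestrict), ?_⟩
    rw [Ext.mk₀_comp_mk₀]
    rfl
  | succ i ih =>
    obtain ⟨k, g, hg⟩ := Module.Finite.exists_fin' R A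
    have hS := LinearMap.shortExact_shortComplexKer hg
    have : Projective g.shortComplexKer.X₂ :=
      (IsProjective.iff_projective (R := R) (Fin k → R)).1 inferInstance
    have : Module.Finite R g.shortComplexKer.X₁ :=
      inferInstanceAs (Module.Finite R (LinearMap.ker g))
    obtain ⟨ζ, rfl⟩ := Ext.contravariant_sequence_exact₃ hS M ξ
      (Ext.eq_zero_of_projective _) (add_comm 1 i)
    obtain ⟨N, hN, η, rfl⟩ := ih ζ
    exact ⟨N, hN, hS.extClass.comp η (add_comm 1 i), Ext.comp_assoc _ _ _ _ _ (by lia)⟩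

lemma vanishes_of_supportDim_lt [IsNoetherianRing R] (I : Ideal R) {n i : ℕ}
    (M : ModuleCat.{u} R) (hM : Module.supportDim R M < n) (hi : n ≤ i) :
    Vanishes I 1 i M := by
  intro t ξ
  obtain ⟨N, hN, η, rfl⟩ := exists_comp_subtype_eq ξ
  have : Module.Finite R N := Module.Finite.iff_fg.2 hN
  exact exists_smul_comp_eq_zero _ _ (vanishes_of_finite_of_supportDim_lt I (ModuleCat.of R N)
    ((Module.supportDim_le_of_injective N.subtype N.injective_subtype).trans_lt hM) hi t η)

lemma Vanishes.of_one {I : Ideal R} {i : ℕ} {M : ModuleCat.{u} R} (h : Vanishes I 1 i M) (x : R) :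
    Vanishes I x i M := fun t ξ ↦ by
  obtain ⟨s, hs, k, hk⟩ := h t ξ
  exact ⟨s, hs, 0, by rw [pow_zero]; rwa [one_pow] at hk⟩

lemma exists_radical_sup_span_singleton_eq [IsNoetherianRing R] [IsLocalRing R] {I : Ideal R}
    (hI : ringKrullDim (R ⧸ I) = 1) :
    ∃ x : R, (I ⊔ Ideal.span {x}).radical = IsLocalRing.maximalIdeal R := by
  rw [← Module.supportDim_quotient_eq_ringKrullDim] at hI
  have mem_support (p : PrimeSpectrum R) : p ∈ Module.support R (R ⧸ I) ↔ I ≤ p.asIdeal := by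
    rw [Module.support_eq_zeroLocus, Ideal.annihilator_quotient, PrimeSpectrum.mem_zeroLocus]
    rfl
  obtain ⟨x, hx, hxp⟩ : ∃ x ∈ IsLocalRing.maximalIdeal R, ∀ p ∈ I.minimalPrimes, x ∉ p := by
    by_contra! h
    have hsub : (IsLocalRing.maximalIdeal R : Set R) ⊆ ⋃ p ∈ I.minimalPrimes, p := fun x hx ↦ by
      simpa using h x hx
    obtain ⟨p, hp, hle⟩ := (Ideal.subset_union_prime_finite
      (Ideal.finite_minimalPrimes_of_isNoetherianRing R I) ⊤ ⊤
      fun p hp _ _ ↦ hp.1.1).1 hsub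
    have : Subsingleton (Module.support R (R ⧸ I)) := by
      have key : ∀ q : Module.support R (R ⧸ I), q.1.asIdeal = IsLocalRing.maximalIdeal R := by
        intro q
        have hq := (mem_support q.1).1 q.2
        have hqm := IsLocalRing.le_maximalIdeal q.1.2.ne_top
        exact le_antisymm hqm (hle.trans (hp.2 ⟨q.1.2, hq⟩ (hqm.trans hle)))
      exact ⟨fun q q' ↦ Subtype.ext (PrimeSpectrum.ext ((key q).trans (key q').symm))⟩
    have h0 : Module.supportDim R (R ⧸ I) ≤ 0 := Order.krullDim_nonpos_of_subsingleton
    rw [hI] at h0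
    exact absurd h0 (by decide)
  refine ⟨x, ?_⟩
  have h1 := Module.supportDim_quotSMulTop_succ_eq_of_notMem_minimalPrimes_of_mem_maximalIdeal
    (M := R ⧸ I) (x := x) (by rwa [Ideal.annihilator_quotient]) hx
  rw [hI] at h1
  have h0 : Module.supportDim R (QuotSMulTop x (R ⧸ I)) = 0 := by
    generalize Module.supportDim R (QuotSMulTop x (R ⧸ I)) = d at h1
    induction d with
    | bot => exact absurd h1 (by decide)
    | coe d =>
      have h1 : d + 1 = 0 + 1 := by exact_mod_cast h1
      exact_mod_cast WithTop.add_right_cancel ENat.one_ne_top h1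
  have h2 := support_of_supportDim_eq_zero R (QuotSMulTop x (R ⧸ I)) h0
  rw [Module.support_quotSMulTop, Module.support_eq_zeroLocus, Ideal.annihilator_quotient,
    ← PrimeSpectrum.zeroLocus_union, ← PrimeSpectrum.zeroLocus_span (_ ∪ _),
    PrimeSpectrum.zeroLocus_eq_iff, Ideal.span_union, Ideal.span_eq] at h2
  rw [h2, (inferInstance : (IsLocalRing.maximalIdeal R).IsPrime).radical]

lemma not_vanishes_of_ringKrullDim_eq_one [IsNoetherianRing R] [IsLocalRing R] {I : Ideal R}
    {M : ModuleCat.{u} R} {n : ℕ}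
    (hd : ringKrullDim (R ⧸ (I + Module.annihilator R M)) = 1)
    (hne : Nontrivial ((localCohomology (IsLocalRing.maximalIdeal R) n).obj M))
    (h : Vanishes I 1 (n - 1) M) : ¬ Vanishes I 1 n M := fun h' ↦ by
  obtain ⟨x, hx⟩ := exists_radical_sup_span_singleton_eq hd
  have hsup : Vanishes (I ⊔ Ideal.span {x}) 1 n M := by
    cases n with
    | zero => exact h'.zero_of_le le_sup_left
    | succ k => exact (h.of_one x).succ_sup_span_singleton h'
  have hsub := (vanishes_one_iff _ _ _).1 hsup.sup_annihilator
  rw [sup_right_comm] at hsub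
  have e := (isoOfSameRadical (J := I ⊔ Module.annihilator R M ⊔ Ideal.span {x})
    (K := IsLocalRing.maximalIdeal R)
    (hx.trans (IsLocalRing.maximalIdeal.isMaximal R).isPrime.radical.symm) n).app M
  exact not_subsingleton _ e.toLinearEquiv.symm.toEquiv.subsingleton

end

end localCohomology

lemma cohomologicalDimension_eq {R : Type u} [CommRing R] {I : Ideal R} {M : ModuleCat.{u} R}
    {n : ℕ} (hne : Nontrivial ((localCohomology I n).obj M))
    (hgt : ∀ i, n < i → Subsingleton ((localCohomology I i).obj M)) :
    cohomologicalDimension I M = n := by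
  refine le_antisymm (sSup_le ?_) (le_sSup ⟨n, rfl, hne⟩)
  rintro _ ⟨i, rfl, hi⟩
  by_contra hlt
  exact not_nontrivial_iff_subsingleton.2 (hgt i (by simpa using hlt)) hi

/-- over a Noetherian local ring, if `M` has Krull dimension `n` with
`H^n_m(M) ≠ 0` and `dim (R/(I + Ann M)) = 1`, then `cd(I,M) = n - 1` or `cd(I,M) = n`. -/
theorem cd_eq_dim_sub_one_or_cd_eq_dim
    (R : Type u) [CommRing R] [IsNoetherianRing R] [IsLocalRing R]
    (M : ModuleCat.{u} R) (n : ℕ)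
    (hn : Order.krullDim (Module.support R M) = (n : WithBot ℕ∞))
    (hne : Nontrivial ((localCohomology (IsLocalRing.maximalIdeal R) n).obj M))
    (I : Ideal R)
    (hd : ringKrullDim (R ⧸ (I + Module.annihilator R M)) = (1 : WithBot ℕ∞)) :
    cohomologicalDimension I M = ((n - 1 : ℕ) : ℕ∞) ∨
      cohomologicalDimension I M = (n : ℕ∞) := by
  have hgt (i : ℕ) (hi : n < i) : Subsingleton ((localCohomology I i).obj M) :=
    (localCohomology.vanishes_one_iff _ _ _).1 <|
      localCohomology.vanishes_of_supportDim_lt (n := n + 1) I M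
        (hn.trans_lt (by exact_mod_cast n.lt_succ_self)) hi
  by_cases h : Nontrivial ((localCohomology I n).obj M)
  · exact .inr (cohomologicalDimension_eq h hgt)
  rw [not_nontrivial_iff_subsingleton] at h
  refine .inl (cohomologicalDimension_eq ?_ fun i hi ↦ ?_)
  · by_contra h'
    rw [not_nontrivial_iff_subsingleton] at h'
    exact localCohomology.not_vanishes_of_ringKrullDim_eq_one hd hne
      ((localCohomology.vanishes_one_iff _ _ _).2 h') ((localCohomology.vanishes_one_iff _ _ _).2 h)
  · obtain rfl | hi := (Nat.le_of_pred_lt hi).eq_or_lt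
    exacts [h, hgt i hi]
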